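/- arXiv:1706.09860 — 2 statements merged into one kernel-verified Lean document; each statement's English description precedes it below -/
import Mathlib

section
/- If T is a Dunford-Schwartz operator on ℓ∞ and x ∈ ℓ_p with 1 ≤ p < ∞, then there exists x̂ ∈ ℓ_p such that the Cesàro averages (1/n) Σ_{k=0}^{n−1} T^k(x) converge to x̂ in the supremum norm ‖·‖_∞. -/
open Filter Finset Topology

/-- The supremum norm of a real sequence. -/
noncomputable def supNorm (x : ℕ → ℝ) : ℝ := ⨆ n, |x n|

/-- `x` is a bounded sequence (i.e. `x ∈ ℓ∞`). -/
def IsBdd (x : ℕ → ℝ) : Prop := ∃ C, ∀ n, |x n| ≤ C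

/-- The non-increasing rearrangement of a bounded sequence, `0`-indexed:
`(x*)_n = inf over finite F with card F ≤ n of sup_{k ∉ F} |x k|`. -/
noncomputable def rearr (x : ℕ → ℝ) (n : ℕ) : ℝ :=
  sInf { r : ℝ | ∃ F : Finset ℕ, F.card ≤ n ∧ r = ⨆ k : {k : ℕ // k ∉ F}, |x k.1| }

/-- A Dunford–Schwartz operator: a linear operator which is an `ℓ₁`-contraction
and an `ℓ∞`-contraction. -/
def IsDS (T : (ℕ → ℝ) →ₗ[ℝ] (ℕ → ℝ)) : Prop :=
  (∀ x : ℕ → ℝ, Summable (fun n => |x n|) →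
      Summable (fun n => |T x n|) ∧ ∑' n, |T x n| ≤ ∑' n, |x n|) ∧
  (∀ x : ℕ → ℝ, IsBdd x → IsBdd (T x) ∧ supNorm (T x) ≤ supNorm x)

/-- The Cesàro average `A(n,T)(x) = (1/n) ∑_{k=0}^{n-1} T^k x`. -/
noncomputable def cesaro (T : (ℕ → ℝ) →ₗ[ℝ] (ℕ → ℝ)) (n : ℕ) (x : ℕ → ℝ) : ℕ → ℝ :=
  fun s => (∑ k ∈ Finset.range n, (⇑T)^[k] x s) / n

/-- Membership in `ℓ_p`. -/
def Memlp (p : ℝ) (x : ℕ → ℝ) : Prop := Summable (fun n => |x n| ^ p)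

/-- The `ℓ_p` norm. -/
noncomputable def lpNorm (p : ℝ) (x : ℕ → ℝ) : ℝ := (∑' n, |x n| ^ p) ^ (1 / p)


namespace DS
variable {T : (ℕ → ℝ) →ₗ[ℝ] (ℕ → ℝ)}

lemma bdd (hT : IsDS T) {x : ℕ → ℝ} {C : ℝ} (h : ∀ n, |x n| ≤ C) (n : ℕ) : |T x n| ≤ C := by
  obtain ⟨⟨D, hD⟩, h2⟩ := hT.2 x ⟨C, h⟩
  have h3 : |T x n| ≤ supNorm (T x) :=
    le_ciSup (f := fun n => |T x n|) ⟨D, by rintro _ ⟨k, rfl⟩; exact hD k⟩ n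
  have h4 : supNorm x ≤ C := ciSup_le h
  linarith

lemma iter_bdd (hT : IsDS T) {x : ℕ → ℝ} {C : ℝ} (h : ∀ n, |x n| ≤ C) (k n : ℕ) :
    |(⇑T)^[k] x n| ≤ C := by
  induction k generalizing n with
  | zero => exact h n
  | succ k ih => rw [Function.iterate_succ_apply']; exact bdd hT ih n

lemma iter_sub (x y : ℕ → ℝ) (k : ℕ) : (⇑T)^[k] (x - y) = (⇑T)^[k] x - (⇑T)^[k] y := by
  simp only [← Module.End.coe_pow, map_sub]

lemma cesaro_sub (x y : ℕ → ℝ) (n s : ℕ) :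
    cesaro T n (x - y) s = cesaro T n x s - cesaro T n y s := by
  simp [cesaro, iter_sub, Finset.sum_sub_distrib, sub_div]

lemma cesaro_bdd (hT : IsDS T) {x : ℕ → ℝ} {C : ℝ} (h : ∀ n, |x n| ≤ C) (n s : ℕ) :
    |cesaro T n x s| ≤ C := by
  have hC : 0 ≤ C := (abs_nonneg _).trans (h 0)
  unfold cesaro
  rw [abs_div, Nat.abs_cast]
  apply div_le_of_le_mul₀ (Nat.cast_nonneg _) hC
  refine (Finset.abs_sum_le_sum_abs _ _).trans ?_
  refine (Finset.sum_le_sum (fun k _ => iter_bdd hT h k s)).trans ?_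
  simp [mul_comm]

/-- truncation -/
noncomputable def tr (N : ℕ) (x : ℕ → ℝ) : ℕ → ℝ := ∑ j ∈ range N, x j • (Pi.single j (1:ℝ) : ℕ → ℝ)

lemma tr_apply (N : ℕ) (x : ℕ → ℝ) (i : ℕ) : tr N x i = if i < N then x i else 0 := by
  simp [tr, Finset.sum_apply, Pi.single_apply]

variable (T) in
/-- matrix -/
noncomputable def mat (i j : ℕ) : ℝ := T (Pi.single j (1:ℝ)) i

lemma T_tr (N : ℕ) (x : ℕ → ℝ) (i : ℕ) : T (tr N x) i = ∑ j ∈ range N, mat T i j * x j := by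
  simp [tr, mat, Finset.sum_apply, mul_comm]

lemma row (hT : IsDS T) (N i : ℕ) : ∑ j ∈ range N, |mat T i j| ≤ 1 := by
  have h := bdd hT (x := tr N (fun j => SignType.sign (mat T i j))) (C := 1) (by
    intro n
    rw [tr_apply]
    split_ifs
    · rcases lt_trichotomy (mat T i n) 0 with h | h | h <;> simp [h, sign_neg, sign_pos]
    · simp) i
  rw [T_tr] at h
  refine le_trans (le_of_eq ?_) ((le_abs_self _).trans h)
  exact Finset.sum_congr rfl fun j _ => (self_mul_sign _).symm

lemma col (hT : IsDS T) (F : Finset ℕ) (j : ℕ) : ∑ i ∈ F, |mat T i j| ≤ 1 := by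
  have h0 : HasSum (fun n => |(Pi.single j (1:ℝ) : ℕ → ℝ) n|) 1 := by
    convert hasSum_single (f := fun n => |(Pi.single j (1:ℝ) : ℕ → ℝ) n|) j ?_ using 1
    · simp
    · intro b hb; simp [hb]
  obtain ⟨h1, h2⟩ := hT.1 _ h0.summable
  rw [h0.tsum_eq] at h2
  exact (h1.sum_le_tsum F (fun _ _ => abs_nonneg _)).trans h2

lemma jensen {p : ℝ} (hp : 1 ≤ p) (s : Finset ℕ) (w x : ℕ → ℝ) (hw : ∑ j ∈ s, |w j| ≤ 1) :
    |∑ j ∈ s, w j * x j| ^ p ≤ ∑ j ∈ s, |w j| * |x j| ^ p := by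
  have hp0 : 0 < p := by linarith
  have hA : 0 ≤ ∑ j ∈ s, |w j| * |x j| ^ p := Finset.sum_nonneg fun _ _ => by positivity
  have h := Real.inner_le_weight_mul_Lp_of_nonneg s hp (fun j => |w j|) (fun j => |x j|)
    (fun _ => abs_nonneg _) (fun _ => abs_nonneg _)
  have h1 : |∑ j ∈ s, w j * x j| ≤ (∑ j ∈ s, |w j| * |x j| ^ p) ^ p⁻¹ := by
    refine (Finset.abs_sum_le_sum_abs _ _).trans ?_
    simp only [abs_mul]
    refine h.trans ?_
    apply mul_le_of_le_one_left (by positivity)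
    apply Real.rpow_le_one (Finset.sum_nonneg fun _ _ => abs_nonneg _) hw
    have := inv_le_one_of_one_le₀ hp
    linarith
  calc _ ≤ ((∑ j ∈ s, |w j| * |x j| ^ p) ^ p⁻¹) ^ p :=
        Real.rpow_le_rpow (abs_nonneg _) h1 hp0.le
    _ = _ := Real.rpow_inv_rpow hA hp0.ne'

lemma to_zero {p : ℝ} (hp : 1 ≤ p) {x : ℕ → ℝ} (hx : Memlp p x) : Tendsto x atTop (𝓝 0) := by
  have hp0 : 0 < p := by linarith
  have h := (hx.tendsto_atTop_zero).rpow_const (p := p⁻¹) (Or.inr (by positivity))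
  rw [Real.zero_rpow (by positivity)] at h
  rw [tendsto_zero_iff_abs_tendsto_zero]
  refine h.congr fun n => ?_
  exact Real.rpow_rpow_inv (abs_nonneg _) hp0.ne'

lemma tr_close {x : ℕ → ℝ} (hx : Tendsto x atTop (𝓝 0)) {ε : ℝ} (hε : 0 < ε) :
    ∃ N, ∀ M ≥ N, ∀ n, |(x - tr M x) n| ≤ ε := by
  obtain ⟨N, hN⟩ := Metric.tendsto_atTop.1 hx ε hε
  refine ⟨N, fun M hM n => ?_⟩
  simp only [Pi.sub_apply, tr_apply]
  split_ifs with h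
  · simpa using hε.le
  · have := hN n (by omega)
    rw [Real.dist_eq] at this
    simpa using this.le

lemma T_tr_tendsto (hT : IsDS T) {x : ℕ → ℝ} (hx : Tendsto x atTop (𝓝 0)) (i : ℕ) :
    Tendsto (fun N => T (tr N x) i) atTop (𝓝 (T x i)) := by
  rw [Metric.tendsto_atTop]
  intro ε hε
  obtain ⟨N, hN⟩ := tr_close hx (half_pos hε)
  refine ⟨N, fun M hM => ?_⟩
  have := bdd hT (hN M hM) i
  rw [map_sub] at this
  rw [dist_comm, Real.dist_eq]
  simp only [Pi.sub_apply] at this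
  linarith

lemma fatou {p : ℝ} (hp : 1 ≤ p) {u : ℕ → ℕ → ℝ} {y : ℕ → ℝ} {C : ℝ}
    (hu : ∀ i, Tendsto (fun n => u n i) atTop (𝓝 (y i)))
    (h : ∀ᶠ n in atTop, ∀ F : Finset ℕ, ∑ i ∈ F, |u n i| ^ p ≤ C) :
    Memlp p y ∧ ∑' n, |y n| ^ p ≤ C := by
  have h1 : ∀ F : Finset ℕ, ∑ i ∈ F, |y i| ^ p ≤ C := by
    intro F
    have ht : Tendsto (fun n => ∑ i ∈ F, |u n i| ^ p) atTop (𝓝 (∑ i ∈ F, |y i| ^ p)) :=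
      tendsto_finsetSum _ fun i _ => (hu i).abs.rpow_const (Or.inr (by linarith))
    exact le_of_tendsto ht (h.mono fun n hn => hn F)
  have h0 : ∀ i, 0 ≤ |y i| ^ p := fun i => by positivity
  exact ⟨summable_of_sum_le h0 h1, Real.tsum_le_of_sum_le h0 h1⟩

lemma contr (hT : IsDS T) {p : ℝ} (hp : 1 ≤ p) {x : ℕ → ℝ} (hx : Memlp p x) :
    Memlp p (T x) ∧ ∑' n, |T x n| ^ p ≤ ∑' n, |x n| ^ p := by
  refine fatou hp (T_tr_tendsto hT (to_zero hp hx)) (Eventually.of_forall fun N F => ?_)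
  calc ∑ i ∈ F, |T (tr N x) i| ^ p
      ≤ ∑ i ∈ F, ∑ j ∈ range N, |mat T i j| * |x j| ^ p := by
        refine Finset.sum_le_sum fun i _ => ?_
        rw [T_tr]
        exact jensen hp _ _ _ (row hT N i)
    _ = ∑ j ∈ range N, (∑ i ∈ F, |mat T i j|) * |x j| ^ p := by
        rw [Finset.sum_comm]; simp only [Finset.sum_mul]
    _ ≤ ∑ j ∈ range N, |x j| ^ p := by
        refine Finset.sum_le_sum fun j _ => ?_
        exact mul_le_of_le_one_left (by positivity) (col hT F j)
    _ ≤ _ := hx.sum_le_tsum _ (fun _ _ => by positivity)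

lemma iter_contr (hT : IsDS T) {p : ℝ} (hp : 1 ≤ p) {x : ℕ → ℝ} (hx : Memlp p x) (k : ℕ) :
    Memlp p ((⇑T)^[k] x) ∧ ∑' n, |(⇑T)^[k] x n| ^ p ≤ ∑' n, |x n| ^ p := by
  induction k with
  | zero => exact ⟨hx, le_rfl⟩
  | succ k ih =>
    rw [Function.iterate_succ_apply']
    have := contr hT hp ih.1
    exact ⟨this.1, this.2.trans ih.2⟩

lemma cesaro_contr (hT : IsDS T) {p : ℝ} (hp : 1 ≤ p) {x : ℕ → ℝ} (hx : Memlp p x) (n : ℕ)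
    (hn : 0 < n) (F : Finset ℕ) : ∑ i ∈ F, |cesaro T n x i| ^ p ≤ ∑' n, |x n| ^ p := by
  have hn' : (0:ℝ) < n := by exact_mod_cast hn
  have hw : ∑ k ∈ range n, |((fun _ => (n:ℝ)⁻¹) : ℕ → ℝ) k| ≤ 1 := by
    simp [hn'.ne']
  calc ∑ i ∈ F, |cesaro T n x i| ^ p
      ≤ ∑ i ∈ F, ∑ k ∈ range n, |(n:ℝ)⁻¹| * |(⇑T)^[k] x i| ^ p := by
        refine Finset.sum_le_sum fun i _ => ?_
        have := jensen hp (range n) _ (fun k => (⇑T)^[k] x i) hw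
        simpa [cesaro, div_eq_inv_mul, Finset.mul_sum] using this
    _ = ∑ k ∈ range n, |(n:ℝ)⁻¹| * ∑ i ∈ F, |(⇑T)^[k] x i| ^ p := by
        rw [Finset.sum_comm]; simp only [Finset.mul_sum]
    _ ≤ ∑ k ∈ range n, |(n:ℝ)⁻¹| * ∑' n, |x n| ^ p := by
        refine Finset.sum_le_sum fun k _ => ?_
        have h := iter_contr hT hp hx k
        gcongr
        exact (h.1.sum_le_tsum _ (fun _ _ => by positivity)).trans h.2
    _ = _ := by
        simp only [Finset.sum_const, Finset.card_range, nsmul_eq_mul]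
        rw [abs_of_pos (by positivity)]
        field_simp

end DS

namespace DS
variable {T : (ℕ → ℝ) →ₗ[ℝ] (ℕ → ℝ)}

abbrev L2 := lp (fun _ : ℕ => ℝ) 2

lemma mem2 (f : ℕ → ℝ) : Memℓp f 2 ↔ Memlp 2 f := by
  rw [memℓp_gen_iff (by simp)]
  simp [Memlp, Real.norm_eq_abs]

/-- restriction to l2 -/
noncomputable def T2l (hT : IsDS T) : L2 →ₗ[ℝ] L2 where
  toFun f := ⟨T f, (mem2 _).2 (contr hT (by norm_num) ((mem2 _).1 f.2)).1⟩
  map_add' f g := by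
    ext i
    exact congrFun (map_add T (f : ℕ → ℝ) (g : ℕ → ℝ)) i
  map_smul' c f := by
    ext i
    simp

lemma T2l_norm (hT : IsDS T) (f : L2) : ‖T2l hT f‖ ≤ 1 * ‖f‖ := by
  rw [one_mul]
  apply lp.norm_le_of_tsum_le (by simp) (norm_nonneg _)
  rw [lp.norm_rpow_eq_tsum (by simp)]
  simpa [Real.norm_eq_abs, T2l] using (contr hT (p := 2) (by norm_num) ((mem2 _).1 f.2)).2

/-- restriction to l2, continuous -/
noncomputable def T2 (hT : IsDS T) : L2 →L[ℝ] L2 := (T2l hT).mkContinuous 1 (T2l_norm hT)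

lemma T2_iter (hT : IsDS T) (f : L2) (k : ℕ) :
    (((⇑(T2 hT))^[k] f : L2) : ℕ → ℝ) = (⇑T)^[k] (f : ℕ → ℝ) := by
  induction k with
  | zero => rfl
  | succ k ih =>
    rw [Function.iterate_succ_apply', Function.iterate_succ_apply', ← ih]
    rfl

lemma cesaro_l2 (hT : IsDS T) {x : ℕ → ℝ} (hx : Memlp 2 x) {ε : ℝ} (hε : 0 < ε) :
    ∃ N, ∀ n ≥ N, ∀ m ≥ N, ∀ s, |cesaro T n x s - cesaro T m x s| ≤ ε := by
  let f : L2 := ⟨x, (mem2 _).2 hx⟩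
  have h := (T2 hT).tendsto_birkhoffAverage_orthogonalProjection
    (LinearMap.mkContinuous_norm_le _ (by norm_num) _) f
  have hc : ∀ n s, (birkhoffAverage ℝ (T2 hT) _root_.id n f : L2) s = cesaro T n x s := by
    intro n s
    simp only [birkhoffAverage, birkhoffSum, cesaro, div_eq_inv_mul, T2_iter, f,
      lp.coeFn_sum, lp.coeFn_smul, _root_.id]
    have := Finset.sum_apply s (range n) (fun k => (⇑T)^[k] x)
    rw [← this]
    rfl
  obtain ⟨N, hN⟩ := Metric.cauchySeq_iff.1 h.cauchySeq ε hε
  refine ⟨N, fun n hn m hm s => ?_⟩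
  have h1 := hN n hn m hm
  rw [dist_eq_norm] at h1
  have h2 := lp.norm_apply_le_norm (by simp)
    (birkhoffAverage ℝ (T2 hT) _root_.id n f - birkhoffAverage ℝ (T2 hT) _root_.id m f) s
  rw [lp.coeFn_sub, Pi.sub_apply, hc, hc, Real.norm_eq_abs] at h2
  exact h2.trans h1.le

lemma tr_mem (N : ℕ) (x : ℕ → ℝ) : Memlp 2 (tr N x) := by
  apply summable_of_ne_finset_zero (s := range N)
  intro b hb
  rw [tr_apply, if_neg (by simpa using hb)]
  simp

lemma cesaro_cauchy (hT : IsDS T) {x : ℕ → ℝ} (hx : Tendsto x atTop (𝓝 0)) {ε : ℝ}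
    (hε : 0 < ε) :
    ∃ N, ∀ n ≥ N, ∀ m ≥ N, ∀ s, |cesaro T n x s - cesaro T m x s| ≤ ε := by
  obtain ⟨M, hM⟩ := tr_close hx (show 0 < ε / 3 by positivity)
  obtain ⟨N, hN⟩ := cesaro_l2 hT (tr_mem M x) (show 0 < ε / 3 by positivity)
  refine ⟨N, fun n hn m hm s => ?_⟩
  have h1 := hN n hn m hm s
  have h2 := cesaro_bdd hT (hM M le_rfl) n s
  have h3 := cesaro_bdd hT (hM M le_rfl) m s
  rw [cesaro_sub] at h2 h3
  rw [abs_le] at *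
  constructor <;> linarith

end DS

/-- Individual ergodic theorem in `ℓ_p`: for a Dunford–Schwartz operator `T` and
`x ∈ ℓ_p`, `1 ≤ p < ∞`, the Cesàro averages converge in the supremum norm to some
`x̂ ∈ ℓ_p`. -/
theorem stmt9 (T : (ℕ → ℝ) →ₗ[ℝ] (ℕ → ℝ)) (hT : IsDS T)
    (p : ℝ) (hp : 1 ≤ p) (x : ℕ → ℝ) (hx : Memlp p x) :
    ∃ x' : ℕ → ℝ, Memlp p x' ∧
      Tendsto (fun n => supNorm (fun s => cesaro T n x s - x' s)) atTop (nhds 0) := by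
  have hc := fun ε (hε : 0 < ε) => DS.cesaro_cauchy hT (DS.to_zero hp hx) (ε := ε) hε
  have hl : ∀ s, ∃ y, Tendsto (fun n => cesaro T n x s) atTop (𝓝 y) := by
    intro s
    apply cauchySeq_tendsto_of_complete
    rw [Metric.cauchySeq_iff]
    intro ε hε
    obtain ⟨N, hN⟩ := hc (ε / 2) (by positivity)
    refine ⟨N, fun m hm n hn => ?_⟩
    have := hN m hm n hn s
    rw [Real.dist_eq]
    linarith
  choose x' hx' using hl
  refine ⟨x', (DS.fatou (C := ∑' n, |x n| ^ p) hp hx' ?_).1, ?_⟩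
  · filter_upwards [eventually_gt_atTop 0] with n hn F
    exact DS.cesaro_contr hT hp hx n hn F
  · rw [Metric.tendsto_atTop]
    intro ε hε
    obtain ⟨N, hN⟩ := hc (ε / 2) (by positivity)
    refine ⟨N, fun n hn => ?_⟩
    have hb : ∀ s, |cesaro T n x s - x' s| ≤ ε / 2 := by
      intro s
      refine le_of_tendsto ((hx' s).const_sub (cesaro T n x s)).abs ?_
      filter_upwards [eventually_ge_atTop N] with m hm
      exact hN n hn m hm s
    have h1 : supNorm (fun s => cesaro T n x s - x' s) ≤ ε / 2 := ciSup_le hb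
    have h2 : 0 ≤ supNorm (fun s => cesaro T n x s - x' s) :=
      Real.iSup_nonneg fun _ => abs_nonneg _
    rw [Real.dist_eq, sub_zero, abs_of_nonneg h2]
    linarith
end

section
/- Let E be a fully symmetric sequence space with E ≠ ℓ∞, and T a Dunford-Schwartz operator on ℓ∞. Then for every x ∈ E there exists x̂ ∈ E such that ‖(1/n) Σ_{k=0}^{n−1} T^k(x) − x̂‖_∞ → 0. -/
open Filter Finset Topology

/-- A fully symmetric sequence space: a nonzero linear subspace of `ℓ∞` with a complete
norm `N` such that Hardy–Littlewood–Pólya majorization `x ≺ y`, `y ∈ E`, `x ∈ ℓ∞` imply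
`x ∈ E` and `N x ≤ N y`. -/
structure FullySymmSeqSpace where
  carrier : Submodule ℝ (ℕ → ℝ)
  nontrivial : carrier ≠ ⊥
  bdd : ∀ x ∈ carrier, IsBdd x
  N : (ℕ → ℝ) → ℝ
  N_zero : N 0 = 0
  N_pos : ∀ x ∈ carrier, x ≠ 0 → 0 < N x
  N_add : ∀ x ∈ carrier, ∀ y ∈ carrier, N (x + y) ≤ N x + N y
  N_smul : ∀ (c : ℝ), ∀ x ∈ carrier, N (c • x) = |c| * N x
  complete : ∀ f : ℕ → (ℕ → ℝ), (∀ k, f k ∈ carrier) →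
    (∀ ε > 0, ∃ K, ∀ m ≥ K, ∀ n ≥ K, N (f m - f n) < ε) →
    ∃ x ∈ carrier, Filter.Tendsto (fun k => N (f k - x)) Filter.atTop (nhds 0)
  fullySymm : ∀ y ∈ carrier, ∀ x : ℕ → ℝ, IsBdd x →
    (∀ k, ∑ n ∈ Finset.range (k + 1), rearr x n ≤ ∑ n ∈ Finset.range (k + 1), rearr y n) →
    x ∈ carrier ∧ N x ≤ N y

/-! ### Rearrangements -/

lemma iSup_compl_nonneg (x : ℕ → ℝ) (F : Finset ℕ) :
    0 ≤ ⨆ k : {k : ℕ // k ∉ F}, |x k.1| :=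
  Real.iSup_nonneg fun _ => abs_nonneg _

lemma rearr_bddBelow (x : ℕ → ℝ) (n : ℕ) :
    BddBelow { r : ℝ | ∃ F : Finset ℕ, F.card ≤ n ∧ r = ⨆ k : {k : ℕ // k ∉ F}, |x k.1| } :=
  ⟨0, by rintro r ⟨F, _, rfl⟩; exact iSup_compl_nonneg x F⟩

lemma rearr_nonempty (x : ℕ → ℝ) (n : ℕ) :
    { r : ℝ | ∃ F : Finset ℕ, F.card ≤ n ∧ r = ⨆ k : {k : ℕ // k ∉ F}, |x k.1| }.Nonempty :=
  ⟨_, ∅, by simp, rfl⟩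

lemma rearr_nonneg (x : ℕ → ℝ) (n : ℕ) : 0 ≤ rearr x n :=
  Real.sInf_nonneg (by rintro r ⟨F, _, rfl⟩; exact iSup_compl_nonneg x F)

lemma rearr_le (x : ℕ → ℝ) (n : ℕ) (F : Finset ℕ) (hF : F.card ≤ n) :
    rearr x n ≤ ⨆ k : {k : ℕ // k ∉ F}, |x k.1| :=
  csInf_le (rearr_bddBelow x n) ⟨F, hF, rfl⟩

lemma rearr_anti (x : ℕ → ℝ) {m n : ℕ} (h : m ≤ n) : rearr x n ≤ rearr x m := by
  apply csInf_le_csInf (rearr_bddBelow x n) (rearr_nonempty x m)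
  rintro r ⟨F, hF, rfl⟩
  exact ⟨F, hF.trans h, rfl⟩

lemma rearr_le_of_bound {x : ℕ → ℝ} {C : ℝ} (hC : ∀ n, |x n| ≤ C) (n : ℕ) : rearr x n ≤ C := by
  refine (rearr_le x n ∅ (by simp)).trans (Real.iSup_le (fun k => hC _) ?_)
  exact (abs_nonneg _).trans (hC 0)

/-- If every set of at most `n` indices misses an index of value at least `c`. -/
lemma le_rearr {x : ℕ → ℝ} (hx : IsBdd x) {c : ℝ} {n : ℕ}
    (h : ∀ F : Finset ℕ, F.card ≤ n → ∃ k, k ∉ F ∧ c ≤ |x k|) : c ≤ rearr x n := by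
  obtain ⟨C, hC⟩ := hx
  apply le_csInf (rearr_nonempty x n)
  rintro r ⟨F, hF, rfl⟩
  obtain ⟨k, hk, hck⟩ := h F hF
  refine hck.trans (le_ciSup (f := fun k : {k : ℕ // k ∉ F} => |x k.1|) ?_ ⟨k, hk⟩)
  exact ⟨C, by rintro _ ⟨j, rfl⟩; exact hC _⟩

lemma sum_le_rearr {x : ℕ → ℝ} (hx : IsBdd x) : ∀ (m : ℕ) (F : Finset ℕ), F.card = m →
    ∑ i ∈ F, |x i| ≤ ∑ n ∈ range m, rearr x n := by
  intro m
  induction m with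
  | zero => intro F hF; simp [Finset.card_eq_zero.mp hF]
  | succ m ih =>
    intro F hF
    have hne : F.Nonempty := Finset.card_pos.mp (by omega)
    obtain ⟨j, hj, hmin⟩ := Finset.exists_min_image F (fun i => |x i|) hne
    rw [← Finset.sum_erase_add _ _ hj, Finset.sum_range_succ]
    refine add_le_add (ih _ (by rw [Finset.card_erase_of_mem hj]; omega)) ?_
    apply le_rearr hx
    intro G hG
    obtain ⟨k, hkF, hkG⟩ := Finset.exists_mem_notMem_of_card_lt_card (s := G) (t := F) (by omega)
    exact ⟨k, hkG, hmin k hkF⟩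

lemma exists_sum_ge_rearr (x : ℕ → ℝ) {ε : ℝ} (hε : 0 < ε) (m : ℕ) :
    ∃ F : Finset ℕ, F.card = m ∧ ∑ n ∈ range m, rearr x n - m * ε ≤ ∑ i ∈ F, |x i| := by
  induction m with
  | zero => exact ⟨∅, by simp⟩
  | succ m ih =>
    obtain ⟨F, hF, h⟩ := ih
    have hne : Nonempty {k : ℕ // k ∉ F} := by
      obtain ⟨k, hk⟩ := Infinite.exists_notMem_finset F
      exact ⟨⟨k, hk⟩⟩
    have h1 : rearr x m - ε < ⨆ k : {k : ℕ // k ∉ F}, |x k.1| := by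
      have := rearr_le x m F hF.le
      linarith
    obtain ⟨⟨k, hk⟩, hk'⟩ := exists_lt_of_lt_ciSup h1
    refine ⟨insert k F, by rw [Finset.card_insert_of_notMem hk, hF], ?_⟩
    rw [Finset.sum_insert hk, Finset.sum_range_succ]
    push_cast
    simp only at hk'
    linarith

lemma rearr_sum_le {x : ℕ → ℝ} {m : ℕ} {B : ℝ}
    (h : ∀ F : Finset ℕ, F.card = m → ∑ i ∈ F, |x i| ≤ B) :
    ∑ n ∈ range m, rearr x n ≤ B := by
  apply le_of_forall_pos_le_add
  intro ε hε
  obtain ⟨F, hF, hs⟩ := exists_sum_ge_rearr x (ε := ε / (m + 1)) (by positivity) m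
  have h1 := h F hF
  have h2 : (m : ℝ) * (ε / (m + 1)) ≤ ε := by
    rw [mul_div_assoc', div_le_iff₀ (by positivity)]
    nlinarith
  linarith

/-! ### Dunford-Schwartz operators -/

lemma supNorm_le {x : ℕ → ℝ} {c : ℝ} (h : ∀ n, |x n| ≤ c) : supNorm x ≤ c :=
  ciSup_le h

lemma le_supNorm {x : ℕ → ℝ} (h : IsBdd x) (n : ℕ) : |x n| ≤ supNorm x := by
  obtain ⟨C, hC⟩ := h
  exact le_ciSup (f := fun n => |x n|) ⟨C, by rintro _ ⟨j, rfl⟩; exact hC _⟩ n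

lemma IsDS.bound {T : (ℕ → ℝ) →ₗ[ℝ] (ℕ → ℝ)} (hT : IsDS T) {w : ℕ → ℝ} {c : ℝ}
    (h : ∀ n, |w n| ≤ c) (n : ℕ) : |T w n| ≤ c := by
  have h1 := hT.2 w ⟨c, h⟩
  exact (le_supNorm h1.1 n).trans (h1.2.trans (supNorm_le h))

lemma IsDS.pow {T : (ℕ → ℝ) →ₗ[ℝ] (ℕ → ℝ)} (hT : IsDS T) (k : ℕ) : IsDS (T ^ k) := by
  induction k with
  | zero => exact ⟨fun x hx => ⟨by simpa using hx, by simp⟩, fun x hx => ⟨by simpa using hx, by simp⟩⟩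
  | succ k ih =>
    rw [pow_succ']
    refine ⟨fun x hx => ?_, fun x hx => ?_⟩
    · have h1 := ih.1 x hx
      have h2 := hT.1 _ h1.1
      exact ⟨h2.1, h2.2.trans h1.2⟩
    · have h1 := ih.2 x hx
      have h2 := hT.2 _ h1.1
      exact ⟨h2.1, h2.2.trans h1.2⟩

lemma IsDS.sum_le {T : (ℕ → ℝ) →ₗ[ℝ] (ℕ → ℝ)} (hT : IsDS T) {u : ℕ → ℝ} (G : Finset ℕ)
    (hu : ∀ i, i ∉ G → u i = 0) (F : Finset ℕ) : ∑ i ∈ F, |T u i| ≤ ∑ i ∈ G, |u i| := by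
  have hG : ∀ i, i ∉ G → |u i| = 0 := fun i hi => by simp [hu i hi]
  have hs : Summable fun n => |u n| := summable_of_ne_finset_zero hG
  have h1 := hT.1 u hs
  rw [← tsum_eq_sum (L := SummationFilter.unconditional ℕ) (s := G) (fun i hi => hG i hi)]
  exact (h1.1.sum_le_tsum F fun i _ => abs_nonneg _).trans h1.2

lemma abs_clip_le {t a : ℝ} (ht : 0 ≤ t) : |max (-t) (min t a)| ≤ t := by
  rw [abs_le]
  exact ⟨le_max_left _ _, max_le (by linarith) (min_le_left _ _)⟩

lemma abs_sub_clip {t a : ℝ} (ht : 0 ≤ t) : |a - max (-t) (min t a)| = max (|a| - t) 0 := by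
  rcases le_total a 0 with ha | ha
  · rw [min_eq_right (by linarith), abs_of_nonpos ha]
    rcases le_total (-t) a with h | h
    · rw [max_eq_right h, max_eq_right (by linarith)]; simp
    · rw [max_eq_left h, max_eq_left (by linarith), abs_of_nonpos (by linarith)]; ring
  · rw [abs_of_nonneg ha]
    rcases le_total t a with h | h
    · rw [min_eq_left h, max_eq_right (by linarith), max_eq_left (by linarith),
        abs_of_nonneg (by linarith)]
    · rw [min_eq_right h, max_eq_right (by linarith), max_eq_right (by linarith)]; simp

/-- `T x ≺ x`. -/
lemma IsDS.majorized {T : (ℕ → ℝ) →ₗ[ℝ] (ℕ → ℝ)} (hT : IsDS T) {x : ℕ → ℝ} (hx : IsBdd x)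
    (k : ℕ) (F : Finset ℕ) (hF : F.card = k + 1) :
    ∑ i ∈ F, |T x i| ≤ ∑ n ∈ range (k + 1), rearr x n := by
  set t := rearr x k with htdef
  have ht : 0 ≤ t := rearr_nonneg x k
  -- finite exceptional set
  have hcard : ∀ G : Finset ℕ, (∀ i ∈ G, t < |x i|) → G.card ≤ k := by
    intro G hG
    by_contra! hlt
    have hne : G.Nonempty := Finset.card_pos.mp (by omega)
    obtain ⟨j, hj, hmin⟩ := Finset.exists_min_image G (fun i => |x i|) hne
    have : |x j| ≤ rearr x k := by
      apply le_rearr hx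
      intro H hH
      obtain ⟨l, hlG, hlH⟩ := Finset.exists_mem_notMem_of_card_lt_card (s := H) (t := G) (by omega)
      exact ⟨l, hlH, hmin l hlG⟩
    have := hG j hj
    linarith
  have hfin : {i | t < |x i|}.Finite := by
    by_contra hinf
    obtain ⟨G, hG, hGc⟩ := Set.Infinite.exists_subset_card_eq hinf (k + 1)
    have := hcard G (fun i hi => hG hi)
    omega
  set G := hfin.toFinset with hGdef
  have hGmem : ∀ i, i ∈ G ↔ t < |x i| := fun i => by simp [hGdef]
  have hGk : G.card ≤ k := hcard G fun i hi => (hGmem i).1 hi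
  let v : ℕ → ℝ := fun i => max (-t) (min t (x i))
  let u : ℕ → ℝ := fun i => x i - v i
  have huv : x = u + v := by ext i; simp [u]
  have hu : ∀ i, i ∉ G → u i = 0 := by
    intro i hi
    rw [hGmem, not_lt] at hi
    rw [← abs_eq_zero, abs_sub_clip ht, max_eq_right (by linarith)]
  have hTv : ∀ i, |T v i| ≤ t := hT.bound fun i => abs_clip_le ht
  have hTu := hT.sum_le G hu F
  have hGu : ∑ i ∈ G, |u i| = ∑ i ∈ G, |x i| - G.card * t := by
    rw [Finset.cast_card, Finset.sum_mul, ← Finset.sum_sub_distrib]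
    refine Finset.sum_congr rfl fun i hi => ?_
    have := (hGmem i).1 hi
    rw [abs_sub_clip ht, max_eq_left (by linarith), one_mul]
  have h1 := sum_le_rearr hx G.card G rfl
  have h2 : ∑ n ∈ range G.card, (rearr x n - t) ≤ ∑ n ∈ range (k + 1), (rearr x n - t) := by
    refine Finset.sum_le_sum_of_subset_of_nonneg (Finset.range_mono (by omega)) ?_
    intro i hi _
    have := rearr_anti x (Nat.lt_succ_iff.mp (Finset.mem_range.mp hi))
    linarith
  simp only [Finset.sum_sub_distrib, Finset.sum_const, Finset.card_range, nsmul_eq_mul] at h2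
  have h3 : ∑ i ∈ F, |T x i| ≤ ∑ i ∈ F, |T u i| + (k + 1 : ℕ) * t := by
    rw [← hF, Finset.cast_card, Finset.sum_mul, ← Finset.sum_add_distrib]
    refine Finset.sum_le_sum fun i _ => ?_
    rw [huv, map_add, Pi.add_apply, one_mul]
    exact (abs_add_le _ _).trans (add_le_add le_rfl (hTv i))
  linarith

/-! ### Truncation and the Hilbert space part -/

/-- Truncation to the first `N` coordinates. -/
def trunc (x : ℕ → ℝ) (N : ℕ) : ℕ → ℝ := fun n => if n < N then x n else 0

lemma map_trunc (T : (ℕ → ℝ) →ₗ[ℝ] (ℕ → ℝ)) (x : ℕ → ℝ) (N : ℕ) (i : ℕ) :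
    T (trunc x N) i = ∑ j ∈ range N, x j * T (Pi.single j 1) i := by
  have : trunc x N = ∑ j ∈ range N, x j • (Pi.single j 1 : ℕ → ℝ) := by
    ext n
    simp [trunc, Finset.sum_apply, Pi.single_apply]
  rw [this, map_sum, Finset.sum_apply]
  simp

lemma IsDS.row_sum {T : (ℕ → ℝ) →ₗ[ℝ] (ℕ → ℝ)} (hT : IsDS T) (N i : ℕ) :
    ∑ j ∈ range N, |T (Pi.single j 1) i| ≤ 1 := by
  let s : ℕ → ℝ := fun j => SignType.sign (T (Pi.single j 1) i)
  have hs : ∀ n, |trunc s N n| ≤ 1 := by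
    intro n
    unfold trunc
    split_ifs
    · simp only [s]
      rcases lt_trichotomy (T (Pi.single n 1) i) 0 with h | h | h <;> simp [h]
    · simp
  have h1 := hT.bound hs i
  rw [map_trunc] at h1
  refine le_trans (le_of_eq ?_) ((le_abs_self _).trans h1)
  refine Finset.sum_congr rfl fun j _ => ?_
  exact (sign_mul_self _).symm

lemma IsDS.col_sum {T : (ℕ → ℝ) →ₗ[ℝ] (ℕ → ℝ)} (hT : IsDS T) (F : Finset ℕ) (j : ℕ) :
    ∑ i ∈ F, |T (Pi.single j 1) i| ≤ 1 := by
  have := hT.sum_le (u := Pi.single j 1) {j} (fun i hi => by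
    rw [Finset.mem_singleton] at hi; simp [hi]) F
  simpa using this

lemma IsDS.sq_sum_trunc {T : (ℕ → ℝ) →ₗ[ℝ] (ℕ → ℝ)} (hT : IsDS T) (x : ℕ → ℝ) (N : ℕ)
    (F : Finset ℕ) : ∑ i ∈ F, (T (trunc x N) i) ^ 2 ≤ ∑ j ∈ range N, x j ^ 2 := by
  have h1 : ∀ i, (T (trunc x N) i) ^ 2 ≤ ∑ j ∈ range N, |T (Pi.single j 1) i| * x j ^ 2 := by
    intro i
    rw [map_trunc]
    have hcs := Finset.sum_sq_le_sum_mul_sum_of_sq_eq_mul (range N)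
      (r := fun j => x j * T (Pi.single j 1) i)
      (f := fun j => |T (Pi.single j 1) i|) (g := fun j => |T (Pi.single j 1) i| * x j ^ 2)
      (fun j _ => abs_nonneg _) (fun j _ => by positivity)
      (fun j _ => by rw [← mul_assoc, abs_mul_abs_self]; ring)
    refine hcs.trans ?_
    refine mul_le_of_le_one_left (Finset.sum_nonneg fun j _ => by positivity) (hT.row_sum N i)
  calc ∑ i ∈ F, (T (trunc x N) i) ^ 2
      ≤ ∑ i ∈ F, ∑ j ∈ range N, |T (Pi.single j 1) i| * x j ^ 2 := Finset.sum_le_sum fun i _ => h1 i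
    _ = ∑ j ∈ range N, (∑ i ∈ F, |T (Pi.single j 1) i|) * x j ^ 2 := by
        rw [Finset.sum_comm]
        simp_rw [Finset.sum_mul]
    _ ≤ ∑ j ∈ range N, x j ^ 2 := by
        refine Finset.sum_le_sum fun j _ => ?_
        exact mul_le_of_le_one_left (sq_nonneg _) (hT.col_sum F j)

lemma exists_trunc {x : ℕ → ℝ} (hx : Tendsto x atTop (𝓝 0)) {ε : ℝ} (hε : 0 < ε) :
    ∃ N, ∀ M ≥ N, ∀ n, |(x - trunc x M) n| ≤ ε := by
  obtain ⟨N, hN⟩ := Metric.tendsto_atTop.mp hx ε hε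
  refine ⟨N, fun M hM n => ?_⟩
  simp only [Pi.sub_apply, trunc]
  split_ifs with h
  · simpa using hε.le
  · have := hN n (by omega)
    rw [Real.dist_eq] at this
    exact this.le

lemma IsDS.tendsto_trunc {T : (ℕ → ℝ) →ₗ[ℝ] (ℕ → ℝ)} (hT : IsDS T) {x : ℕ → ℝ}
    (hx : Tendsto x atTop (𝓝 0)) (i : ℕ) :
    Tendsto (fun N => T (trunc x N) i) atTop (𝓝 (T x i)) := by
  rw [Metric.tendsto_atTop]
  intro ε hε
  obtain ⟨N, hN⟩ := exists_trunc hx (half_pos hε)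
  refine ⟨N, fun M hM => ?_⟩
  have := hT.bound (hN M hM) i
  rw [map_sub, Pi.sub_apply] at this
  rw [dist_comm, Real.dist_eq]
  linarith

/-- The Hilbert space of square summable sequences. -/
abbrev Hil := lp (fun _ : ℕ => ℝ) 2

lemma hil_tendsto (f : Hil) : Tendsto (f : ℕ → ℝ) atTop (𝓝 0) := by
  have h1 := (lp.memℓp f).summable (by norm_num)
  have h2 := h1.tendsto_atTop_zero
  have h3 : Tendsto (fun n => Real.sqrt ((f n) ^ 2)) atTop (𝓝 (Real.sqrt 0)) := by
    refine (Real.continuous_sqrt.tendsto 0).comp ?_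
    simpa using h2
  simp only [Real.sqrt_sq_eq_abs, Real.sqrt_zero] at h3
  exact (tendsto_zero_iff_abs_tendsto_zero _).mpr h3

lemma IsDS.hil_sum {T : (ℕ → ℝ) →ₗ[ℝ] (ℕ → ℝ)} (hT : IsDS T) (f : Hil) (F : Finset ℕ) :
    ∑ i ∈ F, ‖T f i‖ ^ (2 : ENNReal).toReal ≤ ‖f‖ ^ (2 : ENNReal).toReal := by
  have h1 : Tendsto (fun N => ∑ i ∈ F, (T (trunc f N) i) ^ 2) atTop
      (𝓝 (∑ i ∈ F, (T f i) ^ 2)) :=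
    tendsto_finsetSum _ fun i _ => (hT.tendsto_trunc (hil_tendsto f) i).pow 2
  have h2 : ∑ i ∈ F, (T f i) ^ 2 ≤ ‖f‖ ^ 2 := by
    refine le_of_tendsto' h1 fun N => (hT.sq_sum_trunc f N F).trans ?_
    have := lp.sum_rpow_le_norm_rpow (p := 2) (by norm_num) f (range N)
    simpa using this
  simpa using h2

/-- The operator induced on the Hilbert space. -/
noncomputable def hilOp (T : (ℕ → ℝ) →ₗ[ℝ] (ℕ → ℝ)) (hT : IsDS T) : Hil →L[ℝ] Hil :=
  LinearMap.mkContinuous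
    { toFun := fun f => (⟨T f, memℓp_gen' (hT.hil_sum f)⟩ : Hil)
      map_add' := fun f g => by
        ext i
        change T (f + g : Hil) i = T f i + T g i
        rw [lp.coeFn_add, map_add]; rfl
      map_smul' := fun c f => by
        ext i
        change T (c • f : Hil) i = c * T f i
        rw [lp.coeFn_smul, map_smul]; rfl } 1
    (fun f => by
      rw [one_mul]
      exact lp.norm_le_of_forall_sum_le (by norm_num) (norm_nonneg _) (hT.hil_sum f))

lemma hilOp_coe (T : (ℕ → ℝ) →ₗ[ℝ] (ℕ → ℝ)) (hT : IsDS T) (f : Hil) :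
    (hilOp T hT f : ℕ → ℝ) = T f := rfl

lemma hilOp_iter (T : (ℕ → ℝ) →ₗ[ℝ] (ℕ → ℝ)) (hT : IsDS T) (f : Hil) (k : ℕ) :
    (((hilOp T hT)^[k] f : Hil) : ℕ → ℝ) = T^[k] f := by
  induction k with
  | zero => rfl
  | succ k ih => rw [Function.iterate_succ_apply', Function.iterate_succ_apply', hilOp_coe, ih]

lemma IsDS.cauchy_hil {T : (ℕ → ℝ) →ₗ[ℝ] (ℕ → ℝ)} (hT : IsDS T) (f : Hil) {ε : ℝ} (hε : 0 < ε) :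
    ∃ N, ∀ m ≥ N, ∀ n ≥ N, ∀ s, |cesaro T m f s - cesaro T n f s| ≤ ε := by
  have hnorm : ‖hilOp T hT‖ ≤ 1 := LinearMap.mkContinuous_norm_le _ zero_le_one _
  have h1 := (hilOp T hT).tendsto_birkhoffAverage_orthogonalProjection hnorm f
  obtain ⟨N, hN⟩ := Metric.cauchySeq_iff.mp h1.cauchySeq ε hε
  have hc : ∀ n s, cesaro T n f s = birkhoffAverage ℝ (hilOp T hT) _root_.id n f s := by
    intro n s
    rw [birkhoffAverage, birkhoffSum, lp.coeFn_smul, Pi.smul_apply, lp.coeFn_sum, Finset.sum_apply,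
      smul_eq_mul, cesaro, div_eq_inv_mul]
    congr 1
    refine Finset.sum_congr rfl fun k _ => ?_
    rw [← hilOp_iter T hT]; rfl
  refine ⟨N, fun m hm n hn s => ?_⟩
  have h2 := hN m hm n hn
  rw [dist_eq_norm] at h2
  have h3 := lp.norm_apply_le_norm (p := 2) (by norm_num)
    (birkhoffAverage ℝ (hilOp T hT) _root_.id m f - birkhoffAverage ℝ (hilOp T hT) _root_.id n f) s
  rw [lp.coeFn_sub, Pi.sub_apply, ← hc, ← hc, Real.norm_eq_abs] at h3
  linarith

lemma trunc_mem (x : ℕ → ℝ) (N : ℕ) : Memℓp (trunc x N) 2 := by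
  apply memℓp_gen
  apply summable_of_ne_finset_zero (s := range N)
  intro i hi
  rw [Finset.mem_range] at hi
  simp [trunc, hi]

lemma cesaro_sub (T : (ℕ → ℝ) →ₗ[ℝ] (ℕ → ℝ)) (n : ℕ) (x y : ℕ → ℝ) (s : ℕ) :
    cesaro T n (x - y) s = cesaro T n x s - cesaro T n y s := by
  simp only [cesaro, ← Module.End.pow_apply, map_sub, Pi.sub_apply, Finset.sum_sub_distrib, sub_div]

lemma IsDS.cesaro_bound {T : (ℕ → ℝ) →ₗ[ℝ] (ℕ → ℝ)} (hT : IsDS T) {w : ℕ → ℝ} {c : ℝ}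
    (h : ∀ n, |w n| ≤ c) (n s : ℕ) : |cesaro T n w s| ≤ c := by
  have hc : 0 ≤ c := (abs_nonneg _).trans (h 0)
  rw [cesaro, abs_div, Nat.abs_cast]
  refine div_le_of_le_mul₀ (by positivity) hc ?_
  refine (Finset.abs_sum_le_sum_abs _ _).trans ?_
  have : ∑ k ∈ range n, |T^[k] w s| ≤ ∑ k ∈ range n, c := by
    refine Finset.sum_le_sum fun k _ => ?_
    rw [← Module.End.pow_apply]
    exact (hT.pow k).bound h s
  refine this.trans ?_
  simp [mul_comm]

lemma IsDS.cauchy {T : (ℕ → ℝ) →ₗ[ℝ] (ℕ → ℝ)} (hT : IsDS T) {x : ℕ → ℝ}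
    (hx : Tendsto x atTop (𝓝 0)) {ε : ℝ} (hε : 0 < ε) :
    ∃ N, ∀ m ≥ N, ∀ n ≥ N, ∀ s, |cesaro T m x s - cesaro T n x s| ≤ ε := by
  obtain ⟨M, hM⟩ := exists_trunc hx (show 0 < ε / 3 by positivity)
  have hw := hM M le_rfl
  obtain ⟨N, hN⟩ := hT.cauchy_hil ⟨trunc x M, trunc_mem x M⟩ (show 0 < ε / 3 by positivity)
  refine ⟨N, fun m hm n hn s => ?_⟩
  have h1 : |cesaro T m (trunc x M) s - cesaro T n (trunc x M) s| ≤ ε / 3 := hN m hm n hn s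
  have h2 := hT.cesaro_bound hw m s
  have h3 := hT.cesaro_bound hw n s
  rw [cesaro_sub] at h2 h3
  rw [abs_le] at *
  constructor <;> linarith

lemma IsDS.cesaro_majorized {T : (ℕ → ℝ) →ₗ[ℝ] (ℕ → ℝ)} (hT : IsDS T) {x : ℕ → ℝ} (hx : IsBdd x)
    (n k : ℕ) (F : Finset ℕ) (hF : F.card = k + 1) :
    ∑ i ∈ F, |cesaro T n x i| ≤ ∑ j ∈ range (k + 1), rearr x j := by
  have h0 : 0 ≤ ∑ j ∈ range (k + 1), rearr x j := Finset.sum_nonneg fun j _ => rearr_nonneg x j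
  have h1 : ∀ i, |cesaro T n x i| ≤ (∑ l ∈ range n, |(T ^ l) x i|) / n := by
    intro i
    rw [cesaro, abs_div, Nat.abs_cast]
    simp only [Module.End.pow_apply]
    gcongr
    exact Finset.abs_sum_le_sum_abs _ _
  refine (Finset.sum_le_sum fun i _ => h1 i).trans ?_
  rw [← Finset.sum_div, Finset.sum_comm]
  refine div_le_of_le_mul₀ (by positivity) h0 ?_
  refine (Finset.sum_le_sum fun l _ => (hT.pow l).majorized hx k F hF).trans ?_
  simp [mul_comm]

lemma carrier_tendsto (E : FullySymmSeqSpace)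
    (hE : (E.carrier : Set (ℕ → ℝ)) ≠ {y | IsBdd y}) {x : ℕ → ℝ} (hx : x ∈ E.carrier) :
    Tendsto x atTop (𝓝 0) := by
  by_contra hnot
  apply hE
  rw [Metric.tendsto_atTop] at hnot
  push Not at hnot
  obtain ⟨δ, hδ, hinf⟩ := hnot
  refine Set.Subset.antisymm (fun y hy => E.bdd y hy) ?_
  rintro y ⟨C, hC⟩
  have hC0 : 0 ≤ C := (abs_nonneg _).trans (hC 0)
  have hmem : (C / δ) • x ∈ E.carrier := E.carrier.smul_mem _ hx
  refine (E.fullySymm _ hmem y ⟨C, hC⟩ fun k => Finset.sum_le_sum fun n _ => ?_).1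
  refine (rearr_le_of_bound hC n).trans (le_rearr (E.bdd _ hmem) fun F _ => ?_)
  obtain ⟨m, hm, hxm⟩ := hinf (F.sup _root_.id + 1)
  refine ⟨m, fun hmF => ?_, ?_⟩
  · have : m ≤ F.sup _root_.id := Finset.le_sup (f := _root_.id) hmF
    omega
  · rw [Real.dist_eq, sub_zero] at hxm
    rw [Pi.smul_apply, smul_eq_mul, abs_mul, abs_of_nonneg (by positivity)]
    calc C = C / δ * δ := by field_simp
      _ ≤ C / δ * |x m| := by gcongr

/-- Individual ergodic theorem in a fully symmetric sequence space `E ≠ ℓ∞`: the Cesàro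
averages of any `x ∈ E` under a Dunford–Schwartz operator converge in the supremum norm
to some `x̂ ∈ E`. -/
theorem stmt11 (E : FullySymmSeqSpace)
    (hE : (E.carrier : Set (ℕ → ℝ)) ≠ {y | IsBdd y})
    (T : (ℕ → ℝ) →ₗ[ℝ] (ℕ → ℝ)) (hT : IsDS T) :
    ∀ x ∈ E.carrier, ∃ x' ∈ E.carrier,
      Tendsto (fun n => supNorm (fun s => cesaro T n x s - x' s)) atTop (nhds 0) := by
  intro x hx
  have h0 := carrier_tendsto E hE hx
  have hbx := E.bdd x hx
  have hcau : ∀ s, ∃ l, Tendsto (fun n => cesaro T n x s) atTop (𝓝 l) := by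
    intro s
    apply cauchySeq_tendsto_of_complete
    rw [Metric.cauchySeq_iff]
    intro ε hε
    obtain ⟨N, hN⟩ := hT.cauchy h0 (half_pos hε)
    refine ⟨N, fun m hm n hn => ?_⟩
    have := hN m hm n hn s
    rw [Real.dist_eq]
    linarith
  choose x' hx' using hcau
  refine ⟨x', ?_, ?_⟩
  · refine (E.fullySymm x hx x' ?_ ?_).1
    · obtain ⟨C, hC⟩ := hbx
      exact ⟨C, fun s => le_of_tendsto' (hx' s).abs fun n => hT.cesaro_bound hC n s⟩
    · intro k
      refine rearr_sum_le fun F hF => ?_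
      exact le_of_tendsto' (tendsto_finsetSum F fun i _ => (hx' i).abs)
        fun n => hT.cesaro_majorized hbx n k F hF
  · rw [Metric.tendsto_atTop]
    intro ε hε
    obtain ⟨N, hN⟩ := hT.cauchy h0 (half_pos hε)
    refine ⟨N, fun n hn => ?_⟩
    have h1 : supNorm (fun s => cesaro T n x s - x' s) ≤ ε / 2 := by
      refine supNorm_le fun s => ?_
      refine le_of_tendsto ((tendsto_const_nhds (x := cesaro T n x s)).sub (hx' s)).abs ?_
      filter_upwards [eventually_ge_atTop N] with m hm
      exact hN n hn m hm s
    have h2 : 0 ≤ supNorm (fun s => cesaro T n x s - x' s) :=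
      Real.iSup_nonneg fun _ => abs_nonneg _
    rw [Real.dist_eq, sub_zero, abs_of_nonneg h2]
    linarith
end
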